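/- Let α be irrational and let T : S¹ → S¹, Tx = x + α mod 1, be the corresponding ergodic circle rotation on S¹ = ℝ/ℤ with Lebesgue (Haar) probability measure, with Koopman operator 𝒰 f = f∘T on L²(S¹; ℂ). Then there exists a probe vector p ∈ L²(S¹; ℂ) such that for every f ∈ L²(S¹; ℂ), the set {λ ∈ ℂ : f + λp is not a cyclic vector of 𝒰} is at most countable, hence Lebesgue-null in ℂ; in particular, the set of cyclic vectors of 𝒰 is prevalent in L²(S¹; ℂ). -/

import Mathlib

open MeasureTheory Filter

/-- The Koopman operator `𝒰_T : g ↦ g ∘ T` on `L²_μ`. -/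
noncomputable def koopman {X : Type*} [MeasurableSpace X] {μ : Measure X}
    (T : X → X) (hT : MeasurePreserving T μ μ) : Lp ℂ 2 μ →L[ℂ] Lp ℂ 2 μ :=
  (Lp.compMeasurePreservingₗᵢ ℂ T hT).toContinuousLinearMap

/-- `g` is a cyclic vector of a bounded operator `U` on `L²_μ`. -/
def IsCyclicVector {X : Type*} [MeasurableSpace X] {μ : Measure X}
    (U : Lp ℂ 2 μ →L[ℂ] Lp ℂ 2 μ) (g : Lp ℂ 2 μ) : Prop :=
  (Submodule.span ℂ (Set.range fun n : ℕ => (U ^ n) g)).topologicalClosure = ⊤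

/-- A subset `S` of a complex vector space `V` is prevalent if there is a
finite-dimensional probe space (spanned by linearly independent `b 0, …, b (n-1)`) such
that for every `v ∈ V`, Lebesgue-almost every point of `v + E` (in the coordinates given
by the basis `b`) belongs to `S`. -/
def Prevalent {V : Type*} [AddCommGroup V] [Module ℂ V] (S : Set V) : Prop :=
  ∃ (n : ℕ) (b : Fin n → V), LinearIndependent ℂ b ∧
    ∀ v : V, ∀ᵐ c : Fin n → ℂ ∂volume, v + ∑ i, c i • b i ∈ S

/-- The ergodic circle rotation `x ↦ x + α (mod 1)` on `S¹ = ℝ/ℤ`. -/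
noncomputable def circleRotation (a : ℝ) : UnitAddCircle → UnitAddCircle :=
  fun x => x + (a : UnitAddCircle)

lemma circleRotation_measurePreserving (a : ℝ) :
    MeasurePreserving (circleRotation a) volume volume :=
  measurePreserving_add_right volume _

/-!
Rotation acts on the Fourier basis diagonally, with the pairwise distinct unimodular eigenvalues
`fourier n a`. For any such operator `U`, von Neumann's mean ergodic theorem applied to
`(ev i)⁻¹ • U` puts the component of `g` along the `i`-th basis vector into the cyclic subspace of
`g`; hence `g` is cyclic as soon as all its coordinates are nonzero. If `p` has no zero coordinate,
then `f + c • p` has a zero coordinate only for the countably many ratios `c = -fᵢ / pᵢ`.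
-/

open scoped InnerProductSpace

section CyclicSubspace

variable {𝕜 E : Type*} [RCLike 𝕜] [NormedAddCommGroup E]

section NormedSpace

variable [NormedSpace 𝕜 E]

/-- The cyclic subspace of `U` generated by `g`, i.e. the closed linear span of the orbit
`g, U g, U² g, …`. On `L²`, the proposition `cyclicSubspace U g = ⊤` is `IsCyclicVector U g` by
definition. -/
def cyclicSubspace (U : E →L[𝕜] E) (g : E) : Submodule 𝕜 E :=
  (Submodule.span 𝕜 (Set.range fun n : ℕ => (U ^ n) g)).topologicalClosure

lemma isClosed_cyclicSubspace (U : E →L[𝕜] E) (g : E) :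
    IsClosed (cyclicSubspace U g : Set E) :=
  Submodule.isClosed_topologicalClosure _

lemma pow_apply_mem_cyclicSubspace (U : E →L[𝕜] E) (g : E) (n : ℕ) :
    (U ^ n) g ∈ cyclicSubspace U g :=
  Submodule.le_topologicalClosure _ (Submodule.subset_span ⟨n, rfl⟩)

lemma cyclicSubspace_smul_le (c : 𝕜) (U : E →L[𝕜] E) (g : E) :
    cyclicSubspace (c • U) g ≤ cyclicSubspace U g := by
  refine Submodule.topologicalClosure_minimal _ (Submodule.span_le.2 ?_)
    (isClosed_cyclicSubspace U g)
  rintro _ ⟨n, rfl⟩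
  simpa [smul_pow] using Submodule.smul_mem _ (c ^ n) (pow_apply_mem_cyclicSubspace U g n)

lemma birkhoffAverage_mem_cyclicSubspace (U : E →L[𝕜] E) (g : E) (n : ℕ) :
    birkhoffAverage 𝕜 U id n g ∈ cyclicSubspace U g := by
  refine Submodule.smul_mem _ _ (Submodule.sum_mem _ fun k _ => ?_)
  simpa [FunLike.coe_pow_eq_iterate] using pow_apply_mem_cyclicSubspace U g k

end NormedSpace

variable [InnerProductSpace 𝕜 E] [CompleteSpace E]

lemma starProjection_eqLocus_one_mem_cyclicSubspace {U : E →L[𝕜] E} (hU : ‖U‖ ≤ 1) (g : E) :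
    (U.eqLocus (1 : E →L[𝕜] E)).starProjection g ∈ cyclicSubspace U g :=
  (isClosed_cyclicSubspace U g).mem_of_tendsto
    (U.tendsto_birkhoffAverage_orthogonalProjection hU g)
    (.of_forall (birkhoffAverage_mem_cyclicSubspace U g))

lemma inner_smul_mem_cyclicSubspace {U : E →L[𝕜] E} (hU : ‖U‖ ≤ 1) {c : 𝕜} (hc : ‖c‖ = 1)
    {e : E} (he : ‖e‖ = 1) (hUe : ∀ x, U x = c • x ↔ x ∈ Submodule.span 𝕜 {e}) (g : E) :
    ⟪e, g⟫_𝕜 • e ∈ cyclicSubspace U g := by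
  have hc₀ : c ≠ 0 := norm_ne_zero_iff.1 (hc ▸ one_ne_zero)
  have hcU : ‖c⁻¹ • U‖ ≤ 1 := by simpa [norm_smul, hc] using hU
  have hfixed : (c⁻¹ • U).eqLocus (1 : E →L[𝕜] E) = Submodule.span 𝕜 {e} := by
    ext x
    rw [← hUe]
    exact inv_smul_eq_iff₀ hc₀
  have hproj : ((c⁻¹ • U).eqLocus (1 : E →L[𝕜] E)).starProjection g = ⟪e, g⟫_𝕜 • e := by
    simp only [hfixed, Submodule.starProjection_unit_singleton 𝕜 he]
  exact hproj ▸ cyclicSubspace_smul_le c⁻¹ U g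
    (starProjection_eqLocus_one_mem_cyclicSubspace hcU g)

end CyclicSubspace

section Diagonal

variable {ι 𝕜 E : Type*} [RCLike 𝕜] [NormedAddCommGroup E] [InnerProductSpace 𝕜 E]
  (b : HilbertBasis ι 𝕜 E) {U : E →L[𝕜] E} {ev : ι → 𝕜}

lemma hilbertBasis_repr_apply_of_diagonal (hU : ∀ i, U (b i) = ev i • b i) (x : E) (i : ι) :
    b.repr (U x) i = ev i * b.repr x i := by
  classical
  have hcomp : innerSL 𝕜 (b i) ∘L U = ev i • innerSL 𝕜 (b i) := by
    refine ContinuousLinearMap.ext_on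
      (Submodule.dense_iff_topologicalClosure_eq_top.2 b.dense_span) ?_
    rintro _ ⟨j, rfl⟩
    by_cases hij : i = j <;> simp [hU, orthonormal_iff_ite.1 b.orthonormal, hij]
  simpa [b.repr_apply_apply] using DFunLike.congr_fun hcomp x

lemma norm_apply_of_diagonal (hU : ∀ i, U (b i) = ev i • b i) (hev : ∀ i, ‖ev i‖ = 1) (x : E) :
    ‖U x‖ = ‖x‖ := by
  rw [← b.repr.norm_map, ← b.repr.norm_map x, lp.norm_eq_tsum_rpow (by simp),
    lp.norm_eq_tsum_rpow (by simp)]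
  simp only [hilbertBasis_repr_apply_of_diagonal b hU, norm_mul, hev, one_mul]

lemma apply_eq_smul_iff_mem_span_of_diagonal (hU : ∀ i, U (b i) = ev i • b i)
    (hinj : Function.Injective ev) (i : ι) (x : E) :
    U x = ev i • x ↔ x ∈ Submodule.span 𝕜 {b i} := by
  refine ⟨fun hx => ?_, fun hx => ?_⟩
  · have hcoord (j : ι) (hj : j ≠ i) : b.repr x j = 0 := by
      have h : ev j * b.repr x j = ev i * b.repr x j := by
        simpa [hilbertBasis_repr_apply_of_diagonal b hU] using congrArg (b.repr · j) hx
      exact (mul_eq_mul_right_iff.1 h).resolve_left (hinj.ne hj)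
    have hsum : b.repr x i • b i = x :=
      (hasSum_single i fun j hj => by simp [hcoord j hj]).unique (b.hasSum_repr x)
    exact Submodule.mem_span_singleton.2 ⟨_, hsum⟩
  · obtain ⟨c, rfl⟩ := Submodule.mem_span_singleton.1 hx
    rw [map_smul, hU, smul_comm]

theorem cyclicSubspace_eq_top_of_diagonal (hU : ∀ i, U (b i) = ev i • b i)
    (hev : ∀ i, ‖ev i‖ = 1) (hinj : Function.Injective ev) {g : E} (hg : ∀ i, b.repr g i ≠ 0) :
    cyclicSubspace U g = ⊤ := by
  have : CompleteSpace E := b.repr.toIsometryEquiv.completeSpace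
  have hnorm : ‖U‖ ≤ 1 :=
    U.opNorm_le_bound zero_le_one fun x => by rw [norm_apply_of_diagonal b hU hev, one_mul]
  have hbasis (i : ι) : b i ∈ cyclicSubspace U g := by
    rw [← Submodule.smul_mem_iff _ (hg i), b.repr_apply_apply]
    exact inner_smul_mem_cyclicSubspace hnorm (hev i) (b.orthonormal.1 i)
      (apply_eq_smul_iff_mem_span_of_diagonal b hU hinj i) g
  rw [eq_top_iff, ← b.dense_span]
  exact Submodule.topologicalClosure_minimal _ (Submodule.span_le.2 (Set.range_subset_iff.2 hbasis))
    (isClosed_cyclicSubspace U g)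

lemma exists_hilbertBasis_repr_ne_zero [Countable ι] : ∃ p : E, ∀ i, b.repr p i ≠ 0 := by
  obtain ⟨w, hw_pos, _, hw_sum, -⟩ := NNReal.exists_pos_sum_of_countable one_ne_zero ι
  have hmem : Memℓp (fun i => ((√(w i) : ℝ) : 𝕜)) 2 := by
    refine memℓp_gen ?_
    simpa using NNReal.summable_coe.2 hw_sum.summable
  refine ⟨b.repr.symm ⟨_, hmem⟩, fun i => ?_⟩
  simpa using (hw_pos i).ne'

lemma countable_setOf_hilbertBasis_repr_add_smul_eq_zero [Countable ι] {p : E}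
    (hp : ∀ i, b.repr p i ≠ 0) (f : E) :
    {c : 𝕜 | ∃ i, b.repr (f + c • p) i = 0}.Countable := by
  refine (Set.countable_range fun i => -b.repr f i / b.repr p i).mono ?_
  rintro c ⟨i, hi⟩
  refine ⟨i, (div_eq_iff (hp i)).2 (neg_eq_of_add_eq_zero_right ?_)⟩
  rwa [map_add, map_smul, lp.coeFn_add, Pi.add_apply, lp.coeFn_smul, Pi.smul_apply,
    smul_eq_mul] at hi

end Diagonal

lemma prevalent_of_forall_ae_add_smul_mem {V : Type*} [AddCommGroup V] [Module ℂ V] {S : Set V}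
    (p : V) (h : ∀ v, ∀ᵐ c : ℂ, v + c • p ∈ S) : Prevalent S := by
  by_cases hp : p = 0
  · have hS (v : V) : v ∈ S := by simpa [hp] using h v
    exact ⟨0, 0, linearIndependent_empty_type, fun v => .of_forall fun _ => hS _⟩
  · refine ⟨1, fun _ => p, LinearIndependent.of_subsingleton 0 hp, fun v => ?_⟩
    filter_upwards [(volume_preserving_funUnique (Fin 1) ℂ).quasiMeasurePreserving.ae (h v)]
      with c hc
    simpa using hc

theorem circleRotation_cyclic_vectors_prevalent_general {ι E : Type*} [Countable ι]
    [NormedAddCommGroup E] [InnerProductSpace ℂ E] (b : HilbertBasis ι ℂ E) {U : E →L[ℂ] E}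
    {ev : ι → ℂ} (hU : ∀ i, U (b i) = ev i • b i) (hev : ∀ i, ‖ev i‖ = 1)
    (hinj : Function.Injective ev) :
    ∃ p : E, (∀ f : E, {c : ℂ | cyclicSubspace U (f + c • p) ≠ ⊤}.Countable) ∧
      Prevalent {g : E | cyclicSubspace U g = ⊤} := by
  obtain ⟨p, hp⟩ := exists_hilbertBasis_repr_ne_zero b
  have hcount (f : E) : {c : ℂ | cyclicSubspace U (f + c • p) ≠ ⊤}.Countable := by
    refine (countable_setOf_hilbertBasis_repr_add_smul_eq_zero b hp f).mono fun c hc => ?_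
    contrapose! hc
    simpa using cyclicSubspace_eq_top_of_diagonal b hU hev hinj (by simpa using hc)
  exact ⟨p, hcount, prevalent_of_forall_ae_add_smul_mem p fun f => (hcount f).measure_zero volume⟩

section Fourier

variable {T : ℝ}

lemma injective_fourier_apply (hT : T ≠ 0) {x : AddCircle T} (hx : ¬ IsOfFinAddOrder x) :
    Function.Injective fun n : ℤ => fourier n x := by
  intro m n hmn
  simp only [fourier_apply] at hmn
  exact injective_zsmul_iff_not_isOfFinAddOrder.2 hx
    (AddCircle.injective_toCircle hT (Subtype.ext hmn))

variable [Fact (0 < T)]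

lemma koopman_add_right_fourierLp (x : AddCircle T) (n : ℤ) :
    koopman (· + x) (measurePreserving_add_right AddCircle.haarAddCircle x) (fourierLp 2 n) =
      fourier n x • fourierLp 2 n := by
  have hx := measurePreserving_add_right AddCircle.haarAddCircle x
  refine Lp.ext ?_
  filter_upwards [Lp.coeFn_compMeasurePreserving (fourierLp 2 n) hx,
    hx.quasiMeasurePreserving.ae_eq_comp (coeFn_fourierLp 2 n), coeFn_fourierLp 2 n,
    Lp.coeFn_smul (fourier n x) (fourierLp 2 n)] with y hcomp hshift hy hsmul
  refine hcomp.trans ?_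
  rw [hshift, hsmul, Pi.smul_apply, hy]
  simp [fourier_apply, smul_add, AddCircle.toCircle_add, mul_comm]

lemma exists_hilbertBasis_koopman_add_right (μ : Measure (AddCircle T)) [μ.IsAddHaarMeasure]
    [IsProbabilityMeasure μ] (x : AddCircle T) :
    ∃ b : HilbertBasis ℤ ℂ (Lp ℂ 2 μ), ∀ n,
      koopman (· + x) (measurePreserving_add_right μ x) (b n) = fourier n x • b n := by
  obtain rfl : μ = AddCircle.haarAddCircle :=
    Measure.isAddHaarMeasure_eq_of_isProbabilityMeasure _ _
  exact ⟨fourierBasis, fun n => by simpa using koopman_add_right_fourierLp x n⟩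

end Fourier

instance isProbabilityMeasure_volume_unitAddCircle :
    IsProbabilityMeasure (volume : Measure UnitAddCircle) :=
  ⟨UnitAddCircle.measure_univ⟩

lemma not_isOfFinAddOrder_of_irrational {a : ℝ} (ha : Irrational a) :
    ¬ IsOfFinAddOrder (a : UnitAddCircle) :=
  AddCircle.not_isOfFinAddOrder_iff_forall_rat_ne_div.2 fun q hq => ha ⟨q, by simpa using hq⟩

/-- for an irrational rotation of `S¹ = ℝ/ℤ` (with Lebesgue measure) there is
a probe vector `p ∈ L²(S¹; ℂ)` such that for every `f ∈ L²(S¹; ℂ)` the set of `λ ∈ ℂ` for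
which `f + λ p` fails to be a cyclic vector of the Koopman operator is at most countable;
in particular the set of cyclic vectors is prevalent. -/
theorem circleRotation_cyclic_vectors_prevalent (a : ℝ) (ha : Irrational a) :
    ∃ p : Lp ℂ 2 (volume : Measure UnitAddCircle),
      (∀ f : Lp ℂ 2 (volume : Measure UnitAddCircle),
        Set.Countable {lam : ℂ | ¬ IsCyclicVector
          (koopman (circleRotation a) (circleRotation_measurePreserving a))
          (f + lam • p)}) ∧
      Prevalent {g : Lp ℂ 2 (volume : Measure UnitAddCircle) | IsCyclicVector
        (koopman (circleRotation a) (circleRotation_measurePreserving a)) g} := by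
  obtain ⟨b, hb⟩ := exists_hilbertBasis_koopman_add_right volume (a : UnitAddCircle)
  exact circleRotation_cyclic_vectors_prevalent_general b hb (fun _ => Circle.norm_coe _)
    (injective_fourier_apply one_ne_zero (not_isOfFinAddOrder_of_irrational ha))
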